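/- arXiv:2311.03574 — 3 statements merged into one kernel-verified Lean document; each statement's English description precedes it below -/
import Mathlib

section
/- The intersection of multisets of fuzzy values is associative up to equivalence: for all multisets of fuzzy values S, T, and U, (S ∩ T) ∩ U ≡ S ∩ (T ∩ U). -/
/-!
The `k`-th largest element of `S ∩ T` is `S[k] ∧ T[k]` for every `k` (`FuzzyMS.nth_inter`): the
sequence `k ↦ S[k] ∧ T[k]` is nonincreasing, so listing its first `max |S| |T|` terms already lists
`S ∩ T` in decreasing order, and past that index both sides are `0`. Both ways of bracketing a
triple intersection therefore list the terms `S[k] ∧ T[k] ∧ U[k]` for `k ≤ max |S| |T| |U|`, and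
associativity of `∧` and `max` makes them equal as multisets, zeros included.
-/

/-- The `k`-th largest element (1-indexed) of a finite multiset of fuzzy values,
with the convention that it is `0` when `k` exceeds the cardinality. -/
noncomputable def FuzzyMS.nth (S : Multiset unitInterval) (k : ℕ) : unitInterval :=
  ((S.sort (· ≤ ·)).reverse).getD (k - 1) 0

/-- Equivalence of multisets of fuzzy values: equal multiplicities on `(0,1]`. -/
noncomputable def FuzzyMS.Equiv (S T : Multiset unitInterval) : Prop :=
  ∀ x : unitInterval, 0 < x → S.count x = T.count x

/-- Fuzzy union: `{S[1] ∨ T[1], …, S[n] ∨ T[n]}` where `n = max(|S|,|T|)`. -/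
noncomputable def FuzzyMS.union (S T : Multiset unitInterval) : Multiset unitInterval :=
  (Multiset.range (max (Multiset.card S) (Multiset.card T))).map
    (fun i => FuzzyMS.nth S (i + 1) ⊔ FuzzyMS.nth T (i + 1))

/-- Fuzzy intersection: `{S[1] ∧ T[1], …, S[n] ∧ T[n]}` where `n = max(|S|,|T|)`. -/
noncomputable def FuzzyMS.inter (S T : Multiset unitInterval) : Multiset unitInterval :=
  (Multiset.range (max (Multiset.card S) (Multiset.card T))).map
    (fun i => FuzzyMS.nth S (i + 1) ⊓ FuzzyMS.nth T (i + 1))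

/-- Fuzzy difference: `{S[1]·δ₁, …, S[m]·δ_m}` with `m = |S|`,
`δ_k = 1` if `S[k] > T[k]` and `δ_k = 0` otherwise. -/
noncomputable def FuzzyMS.diff (S T : Multiset unitInterval) : Multiset unitInterval :=
  (Multiset.range (Multiset.card S)).map
    (fun i => if FuzzyMS.nth T (i + 1) < FuzzyMS.nth S (i + 1) then FuzzyMS.nth S (i + 1) else 0)

/-- `S ⊆ T` iff there exists `R` with `S ∪ R ≡ T`. (The disjoint union `S ⊎ T` is `S + T`.) -/
noncomputable def FuzzyMS.Subset (S T : Multiset unitInterval) : Prop :=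
  ∃ R : Multiset unitInterval, FuzzyMS.Equiv (FuzzyMS.union S R) T

/-- `Count≥c(S)`: the number of elements of `S` (with multiplicity) that are `≥ c`. -/
noncomputable def FuzzyMS.countGe (c : unitInterval) (S : Multiset unitInterval) : ℕ :=
  (S.filter (fun x => c ≤ x)).card

theorem FuzzyMS.nth_eq_zero_of_card_le {S : Multiset unitInterval} {i : ℕ}
    (h : Multiset.card S ≤ i) : FuzzyMS.nth S (i + 1) = 0 := by
  unfold FuzzyMS.nth
  exact List.getD_eq_default _ _ (by simpa using h)

theorem FuzzyMS.nth_succ_antitone (S : Multiset unitInterval) :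
    Antitone fun i => FuzzyMS.nth S (i + 1) := by
  intro i j hij
  change FuzzyMS.nth S (j + 1) ≤ FuzzyMS.nth S (i + 1)
  rcases le_or_gt (Multiset.card S) j with hj | hj
  · rw [FuzzyMS.nth_eq_zero_of_card_le hj]
    exact unitInterval.nonneg'
  · have hsort : ((S.sort (· ≤ ·)).reverse).Pairwise (· ≥ ·) :=
      List.pairwise_reverse.2 (Multiset.pairwise_sort S (· ≤ ·))
    have hlen : ((S.sort (· ≤ ·)).reverse).length = Multiset.card S := by simp
    unfold FuzzyMS.nth
    rw [Nat.add_sub_cancel, Nat.add_sub_cancel, List.getD_eq_getElem _ _ (by omega),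
      List.getD_eq_getElem _ _ (by omega)]
    rcases hij.eq_or_lt with rfl | hlt
    · exact le_rfl
    · exact List.pairwise_iff_getElem.1 hsort i j (by omega) (by omega) hlt

/-- A nonincreasing enumeration of a multiset is its decreasing sort. -/
theorem FuzzyMS.nth_map_range {f : ℕ → unitInterval} (hf : Antitone f) {n i : ℕ} (hi : i < n) :
    FuzzyMS.nth ((Multiset.range n).map f) (i + 1) = f i := by
  have hsort : (((Multiset.range n).map f).sort (· ≤ ·)).reverse = (List.range n).map f := by
    refine List.Perm.eq_of_pairwise' (r := (· ≥ ·))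
      (List.pairwise_reverse.2 (Multiset.pairwise_sort _ (· ≤ ·))) ?_ ?_
    · exact List.pairwise_map.2 (List.pairwise_lt_range.imp fun h => hf h.le)
    · refine (List.reverse_perm _).trans (Multiset.coe_eq_coe.1 ?_)
      rw [Multiset.sort_eq]
      rfl
  unfold FuzzyMS.nth
  rw [hsort, Nat.add_sub_cancel, List.getD_eq_getElem _ _ (by simpa using hi)]
  simp

theorem FuzzyMS.card_inter (S T : Multiset unitInterval) :
    Multiset.card (FuzzyMS.inter S T) = max (Multiset.card S) (Multiset.card T) := by
  simp [FuzzyMS.inter]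

theorem FuzzyMS.nth_inter (S T : Multiset unitInterval) (i : ℕ) :
    FuzzyMS.nth (FuzzyMS.inter S T) (i + 1) =
      FuzzyMS.nth S (i + 1) ⊓ FuzzyMS.nth T (i + 1) := by
  rcases lt_or_ge i (max (Multiset.card S) (Multiset.card T)) with hi | hi
  · exact FuzzyMS.nth_map_range
      ((FuzzyMS.nth_succ_antitone S).inf (FuzzyMS.nth_succ_antitone T)) hi
  · rw [FuzzyMS.nth_eq_zero_of_card_le (FuzzyMS.card_inter S T ▸ hi),
      FuzzyMS.nth_eq_zero_of_card_le ((le_max_left _ _).trans hi),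
      FuzzyMS.nth_eq_zero_of_card_le ((le_max_right _ _).trans hi), inf_idem]

theorem inter_assoc (S T U : Multiset unitInterval) :
    FuzzyMS.Equiv (FuzzyMS.inter (FuzzyMS.inter S T) U)
      (FuzzyMS.inter S (FuzzyMS.inter T U)) := by
  have h : FuzzyMS.inter (FuzzyMS.inter S T) U = FuzzyMS.inter S (FuzzyMS.inter T U) := by
    rw [FuzzyMS.inter, FuzzyMS.inter.eq_1 S (FuzzyMS.inter T U)]
    simp only [FuzzyMS.card_inter, FuzzyMS.nth_inter, max_assoc, inf_assoc]
  intro x _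
  rw [h]
end

section
/- Union distributes over disjoint union up to equivalence: for all multisets of fuzzy values S, T, and U, S ⊎ (T ∪ U) ≡ (S ⊎ T) ∪ (S ⊎ U). -/
/-- In a decreasing list, the elements satisfying an upward closed predicate form an initial
segment; as the predicate fails at `0`, the default value beyond the end does no harm. -/
lemma prop_getD_iff (p : unitInterval → Prop) [DecidablePred p]
    (hp : ∀ a b, a ≤ b → p a → p b) (h0 : ¬ p 0) (l : List unitInterval)
    (hl : l.Pairwise (fun a b => b ≤ a)) (i : ℕ) :
    p (l.getD i 0) ↔ i < l.countP (fun a => decide (p a)) := by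
  induction l generalizing i with
  | nil => simpa using h0
  | cons a l ih =>
    rw [List.pairwise_cons] at hl
    have ih := ih hl.2
    by_cases ha : p a
    · rw [List.countP_cons_of_pos (by simpa using ha)]
      cases i with
      | zero => simpa using ha
      | succ j => simpa using ih j
    · have hz : l.countP (fun a => decide (p a)) = 0 := by
        rw [List.countP_eq_zero]
        intro b hb hpb
        exact ha (hp b a (hl.1 b hb) (by simpa using hpb))
      rw [List.countP_cons_of_neg (by simpa using ha)]
      cases i with
      | zero => simpa [hz] using ha
      | succ j =>
        have := ih j
        rw [hz] at this ⊢
        simpa using this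

lemma prop_nth_iff (p : unitInterval → Prop) [DecidablePred p]
    (hp : ∀ a b, a ≤ b → p a → p b) (h0 : ¬ p 0) (S : Multiset unitInterval) (i : ℕ) :
    p (FuzzyMS.nth S (i + 1)) ↔ i < S.countP p := by
  have hs : ((S.sort (· ≤ ·)).reverse).Pairwise (fun a b => b ≤ a) := by
    rw [List.pairwise_reverse]
    exact S.pairwise_sort (· ≤ ·)
  have hc : ((S.sort (· ≤ ·)).reverse).countP (fun a => decide (p a)) = S.countP p := by
    rw [List.countP_reverse, ← Multiset.coe_countP, Multiset.sort_eq]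
  rw [FuzzyMS.nth, Nat.add_sub_cancel, prop_getD_iff p hp h0 _ hs, hc]

lemma countP_union (p : unitInterval → Prop) [DecidablePred p]
    (hp : ∀ a b, a ≤ b → p a → p b) (h0 : ¬ p 0) (T U : Multiset unitInterval) :
    (FuzzyMS.union T U).countP p = max (T.countP p) (U.countP p) := by
  have hsup : ∀ a b, p (a ⊔ b) ↔ p a ∨ p b := by
    intro a b
    constructor
    · intro h
      rcases le_total a b with hab | hab
      · exact Or.inr (by rwa [sup_eq_right.2 hab] at h)
      · exact Or.inl (by rwa [sup_eq_left.2 hab] at h)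
    · rintro (h | h)
      · exact hp _ _ le_sup_left h
      · exact hp _ _ le_sup_right h
  have hT := Multiset.countP_le_card p T
  have hU := Multiset.countP_le_card p U
  rw [FuzzyMS.union, Multiset.countP_map]
  simp only [hsup, prop_nth_iff p hp h0, ← lt_max_iff]
  set m := max (T.countP p) (U.countP p)
  set n := max (Multiset.card T) (Multiset.card U)
  have hmn : m ≤ n := max_le_max hT hU
  change ((Finset.range n).filter (fun i => i < m)).card = m
  have : (Finset.range n).filter (fun i => i < m) = Finset.range m := by
    ext i
    simp only [Finset.mem_filter, Finset.mem_range]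
    omega
  rw [this, Finset.card_range]

lemma countP_le_eq (x : unitInterval) (S : Multiset unitInterval) :
    S.countP (x ≤ ·) = S.count x + S.countP (x < ·) := by
  induction S using Multiset.induction_on with
  | empty => simp
  | cons a S ih =>
    rw [Multiset.countP_cons, Multiset.count_cons, Multiset.countP_cons, ih]
    rcases lt_trichotomy x a with h | h | h
    · simp [h, h.le, h.ne]; omega
    · simp [h]; omega
    · simp [h.not_ge, h.not_gt, h.ne']

theorem union_distrib_add (S T U : Multiset unitInterval) :
    FuzzyMS.Equiv (S + FuzzyMS.union T U)
      (FuzzyMS.union (S + T) (S + U)) := by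
  intro x hx
  have key : ∀ (p : unitInterval → Prop) [DecidablePred p], (∀ a b, a ≤ b → p a → p b) →
      ¬ p 0 → (S + FuzzyMS.union T U).countP p =
        (FuzzyMS.union (S + T) (S + U)).countP p := by
    intro p _ hp h0
    rw [Multiset.countP_add, countP_union p hp h0, countP_union p hp h0, Multiset.countP_add,
      Multiset.countP_add]
    omega
  have h1 := key (x ≤ ·) (fun a b hab h => le_trans h hab) (not_le.2 hx)
  have h2 := key (x < ·) (fun a b hab h => lt_of_lt_of_le h hab) (not_lt.2 hx.le)
  rw [countP_le_eq, countP_le_eq] at h1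
  omega
end

section
/- For all multisets of fuzzy values S, T, and U, (S ∖ T) ∪ (S ∖ U) ⊆ S ∖ (T ∩ U). -/
namespace FuzzyMS

/-- A descending list enumerates its multiset in the order used by `nth`. -/
lemma nth_coe (l : List unitInterval) (h : l.Pairwise (· ≥ ·)) (i : ℕ) :
    nth (l : Multiset unitInterval) (i + 1) = l.getD i 0 := by
  have hs : (Multiset.sort (l : Multiset unitInterval) (· ≤ ·)).reverse = l := by
    refine List.Perm.eq_of_pairwise (le := (· ≥ ·)) ?_ ?_ h ?_
    · intro a b _ _ h1 h2
      exact le_antisymm h2 h1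
    · rw [List.pairwise_reverse]
      exact Multiset.pairwise_sort _ _
    · refine (List.reverse_perm _).trans ?_
      rw [← Multiset.coe_eq_coe, Multiset.sort_eq]
  rw [nth, hs, Nat.add_sub_cancel]

lemma exists_desc (S : Multiset unitInterval) :
    ∃ l : List unitInterval, l.Pairwise (· ≥ ·) ∧ (l : Multiset unitInterval) = S := by
  refine ⟨(S.sort (· ≤ ·)).reverse, ?_, ?_⟩
  · rw [List.pairwise_reverse]
    exact Multiset.pairwise_sort _ _
  · rw [Multiset.coe_reverse, Multiset.sort_eq]

lemma le_getD_iff {c : unitInterval} (hc : 0 < c) (l : List unitInterval)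
    (h : l.Pairwise (· ≥ ·)) (i : ℕ) :
    c ≤ l.getD i 0 ↔ i < l.countP (fun x => c ≤ x) := by
  induction l generalizing i with
  | nil => simpa using hc.ne'
  | cons a l ih =>
    rw [List.pairwise_cons] at h
    by_cases hca : c ≤ a
    · cases i with
      | zero => simp [hca]
      | succ i =>
        rw [List.getD_cons_succ, ih h.2, List.countP_cons]
        simp [hca]
    · have h0 : l.countP (fun x => c ≤ x) = 0 := by
        rw [List.countP_eq_zero]
        intro x hx
        simpa using lt_of_le_of_lt (h.1 x hx) (not_le.1 hca)
      cases i with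
      | zero => simp [hca, h0]
      | succ i =>
        rw [List.getD_cons_succ, ih h.2, List.countP_cons]
        simp [hca, h0]

lemma le_nth_iff {c : unitInterval} (hc : 0 < c) (S : Multiset unitInterval) (i : ℕ) :
    c ≤ nth S (i + 1) ↔ i < S.countP (fun x => c ≤ x) := by
  obtain ⟨l, hl, rfl⟩ := exists_desc S
  rw [nth_coe l hl, le_getD_iff hc l hl, Multiset.coe_countP]

lemma nth_le_of_countP_le {A B : Multiset unitInterval}
    (h : ∀ c : unitInterval, 0 < c → A.countP (fun x => c ≤ x) ≤ B.countP (fun x => c ≤ x))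
    (i : ℕ) : nth A (i + 1) ≤ nth B (i + 1) := by
  rcases eq_or_lt_of_le (show (0 : unitInterval) ≤ nth A (i + 1) from unitInterval.nonneg')
    with h0 | h0
  · rw [← h0]
    exact unitInterval.nonneg'
  · exact (le_nth_iff h0 B i).2 (((le_nth_iff h0 A i).1 le_rfl).trans_le (h _ h0))

lemma nth_antitone (S : Multiset unitInterval) : Antitone (fun i => nth S (i + 1)) := by
  intro i j hij
  rcases eq_or_lt_of_le (show (0 : unitInterval) ≤ nth S (j + 1) from unitInterval.nonneg')
    with h0 | h0
  · simp only [← h0]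
    exact unitInterval.nonneg'
  · exact (le_nth_iff h0 S i).2 (hij.trans_lt ((le_nth_iff h0 S j).1 le_rfl))

lemma nth_eq_zero (S : Multiset unitInterval) {i : ℕ} (h : S.card ≤ i) : nth S (i + 1) = 0 := by
  simp only [nth]
  apply List.getD_eq_default
  simpa using h

lemma nth_map_range_s12 {f : ℕ → unitInterval} (hf : Antitone f) (n : ℕ)
    (h0 : ∀ i, n ≤ i → f i = 0) (i : ℕ) :
    nth ((Multiset.range n).map f) (i + 1) = f i := by
  have hp : ((List.range n).map f).Pairwise (· ≥ ·) := by
    rw [List.pairwise_map]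
    exact List.pairwise_lt_range.imp fun h => hf h.le
  have := nth_coe _ hp i
  rw [← Multiset.map_coe, Multiset.coe_range] at this
  rw [this]
  by_cases hi : i < n
  · rw [List.getD_eq_getElem _ _ (by simpa using hi)]
    simp
  · rw [List.getD_eq_default _ _ (by simpa using hi), h0 i (not_lt.1 hi)]

lemma nth_union (S T : Multiset unitInterval) (i : ℕ) :
    nth (union S T) (i + 1) = nth S (i + 1) ⊔ nth T (i + 1) := by
  refine nth_map_range_s12 (f := fun i => nth S (i + 1) ⊔ nth T (i + 1))
    (fun a b h => sup_le_sup (nth_antitone S h) (nth_antitone T h)) _ (fun j hj => ?_) i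
  simp [nth_eq_zero S ((le_max_left _ _).trans hj), nth_eq_zero T ((le_max_right _ _).trans hj)]

lemma nth_inter_s12 (S T : Multiset unitInterval) (i : ℕ) :
    nth (inter S T) (i + 1) = nth S (i + 1) ⊓ nth T (i + 1) := by
  refine nth_map_range_s12 (f := fun i => nth S (i + 1) ⊓ nth T (i + 1))
    (fun a b h => inf_le_inf (nth_antitone S h) (nth_antitone T h)) _ (fun j hj => ?_) i
  simp [nth_eq_zero S ((le_max_left _ _).trans hj), nth_eq_zero T ((le_max_right _ _).trans hj)]

/-- Listing the first `n ≥ |S|` values `S[1], …, S[n]` gives back `S` up to zeros. -/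
lemma map_nth_range (S : Multiset unitInterval) {n : ℕ} (hn : S.card ≤ n) :
    (Multiset.range n).map (fun i => nth S (i + 1)) =
      S + Multiset.replicate (n - S.card) 0 := by
  obtain ⟨l, hl, rfl⟩ := exists_desc S
  rw [Multiset.coe_card] at hn ⊢
  rw [← Multiset.coe_range, Multiset.map_coe, ← Multiset.coe_replicate, Multiset.coe_add]
  congr 1
  apply List.ext_getElem
  · simp
    omega
  · intro i h1 h2
    simp only [List.getElem_map, List.getElem_range, nth_coe l hl, List.getElem_append,
      List.getElem_replicate]
    split_ifs with h
    · exact List.getD_eq_getElem _ _ h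
    · exact List.getD_eq_default _ _ (not_lt.1 h)

/-- The witness is `R = B`: under the hypothesis `A ∪ B` is `B` padded with zeros. -/
lemma subset_of_nth_le {A B : Multiset unitInterval}
    (h : ∀ i, nth A (i + 1) ≤ nth B (i + 1)) : FuzzyMS.Subset A B := by
  refine ⟨B, fun x hx => ?_⟩
  have : union A B = B + Multiset.replicate (max A.card B.card - B.card) 0 := by
    rw [← map_nth_range B (le_max_right _ _), union]
    exact Multiset.map_congr rfl fun i _ => sup_eq_right.2 (h i)
  rw [this, Multiset.count_add, Multiset.count_replicate, if_neg hx.ne, add_zero]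

/-- The difference is antitone in its second argument. -/
lemma nth_diff_le (S : Multiset unitInterval) {T T' : Multiset unitInterval}
    (h : ∀ i, nth T' (i + 1) ≤ nth T (i + 1)) (i : ℕ) :
    nth (diff S T) (i + 1) ≤ nth (diff S T') (i + 1) := by
  refine nth_le_of_countP_le (fun c hc => ?_) i
  rw [diff, diff, Multiset.countP_map, Multiset.countP_map]
  refine Multiset.card_le_card (Multiset.monotone_filter_right _ fun j hj => ?_)
  -- As `c > 0`, an entry `≥ c` is not one of those set to zero.
  split_ifs at hj with h1
  · rwa [if_pos ((h j).trans_lt h1)]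
  · exact absurd hj (not_le.2 hc)

end FuzzyMS

theorem diff_union_subset_diff_inter (S T U : Multiset unitInterval) :
    FuzzyMS.Subset (FuzzyMS.union (FuzzyMS.diff S T) (FuzzyMS.diff S U))
      (FuzzyMS.diff S (FuzzyMS.inter T U)) := by
  refine FuzzyMS.subset_of_nth_le fun i => ?_
  rw [FuzzyMS.nth_union]
  refine sup_le (FuzzyMS.nth_diff_le S (fun j => ?_) i) (FuzzyMS.nth_diff_le S (fun j => ?_) i)
  · rw [FuzzyMS.nth_inter_s12]
    exact inf_le_left
  · rw [FuzzyMS.nth_inter_s12]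
    exact inf_le_right
end
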